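/- Let G be a subgroup of S_n with block partition 𝓑. Every order-automorphism of U_{G⋌𝓑} restricts to the identity on the fence F = {ℓ_1,u_1,…,ℓ_n,u_n}. -/

import Mathlib

/-!
The elements `u_i` are exactly the elements of height one in `U_{G⋌𝓑}`: something lies strictly below
them, but no chain of length two does (`isUp_iff`). An automorphism therefore permutes the `u_i`.
Since the only elements strictly below some `u_k` are `ℓ_k` and `ℓ_{k+1}` (`lt_up_iff`), it also maps
each `ℓ_i` to some `ℓ_j`, and so it induces an automorphism of the fence that respects the two levels.
The fence is a path with one end, `ℓ_1`, on the lower level and the other, `u_n`, on the upper level.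
Hence `ℓ_1`, the only lower element with a single upper neighbour, is fixed, and the whole path is
fixed by moving along it from there (`fence_rigid`).
-/

/-- The set of restrictions `θ|_B` (as functions `B → Fin n`) of elements `θ ∈ G`
to blocks `B ∈ 𝓑`, i.e. `⋃_{B ∈ 𝓑} G|_B`. -/
def Restr (n : ℕ) (G : Subgroup (Equiv.Perm (Fin n))) (𝓑 : Set (Set (Fin n))) :
    Set ((B : Set (Fin n)) × (B → Fin n)) :=
  { p | p.1 ∈ 𝓑 ∧ ∃ θ ∈ G, p.2 = fun x => θ x.1 }

/-- The underlying set of the ordered set `U_{G⋌𝓑}`: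
the fence `F = {ℓ_1,u_1,…,ℓ_n,u_n}` (constructors `low`, `up`), the copy of `G`
(constructor `grp`), the sets `D^μ = dom(μ) × {μ}` (constructor `cell`), and the
copy of `T = {1,…,n}` (constructor `pt`). -/
inductive UPt (n : ℕ) (G : Subgroup (Equiv.Perm (Fin n))) (𝓑 : Set (Set (Fin n))) where
  | low : Fin n → UPt n G 𝓑
  | up : Fin n → UPt n G 𝓑
  | grp : G → UPt n G 𝓑
  | cell : (μ : Restr n G 𝓑) → (j : μ.1.1) → UPt n G 𝓑
  | pt : Fin n → UPt n G 𝓑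

/-- The generating strict comparabilities of `U_{G⋌𝓑}`:
`ℓ_i < u_i`, `ℓ_{i+1} < u_i`, `u_j < (j,μ)`, `(j,μ) < μ(j)`, and `θ < (j, θ|_B)`. -/
inductive UStep (n : ℕ) (G : Subgroup (Equiv.Perm (Fin n))) (𝓑 : Set (Set (Fin n))) :
    UPt n G 𝓑 → UPt n G 𝓑 → Prop where
  | fence_eq (i : Fin n) : UStep n G 𝓑 (.low i) (.up i)
  | fence_succ (i j : Fin n) (h : (j : ℕ) = (i : ℕ) + 1) : UStep n G 𝓑 (.low j) (.up i)
  | up_cell (μ : Restr n G 𝓑) (j : μ.1.1) : UStep n G 𝓑 (.up j.1) (.cell μ j)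
  | cell_pt (μ : Restr n G 𝓑) (j : μ.1.1) : UStep n G 𝓑 (.cell μ j) (.pt (μ.1.2 j))
  | grp_cell (θ : G) (μ : Restr n G 𝓑) (j : μ.1.1)
      (h : ∀ x : μ.1.1, μ.1.2 x = (θ : Equiv.Perm (Fin n)) x.1) :
      UStep n G 𝓑 (.grp θ) (.cell μ j)

/-- Rank function used to prove antisymmetry of the generated order. -/
def UPt.rank {n : ℕ} {G : Subgroup (Equiv.Perm (Fin n))} {𝓑 : Set (Set (Fin n))} :
    UPt n G 𝓑 → ℕ
  | .low _ => 0
  | .grp _ => 0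
  | .up _ => 1
  | .cell _ _ => 2
  | .pt _ => 3

theorem UStep.rank_lt {n : ℕ} {G : Subgroup (Equiv.Perm (Fin n))} {𝓑 : Set (Set (Fin n))}
    {x y : UPt n G 𝓑} (h : UStep n G 𝓑 x y) : x.rank < y.rank := by
  cases h <;> simp [UPt.rank]

/-- The order of `U_{G⋌𝓑}`: the reflexive-transitive closure of the generating
comparabilities. -/
instance UPt.instPartialOrder (n : ℕ) (G : Subgroup (Equiv.Perm (Fin n)))
    (𝓑 : Set (Set (Fin n))) : PartialOrder (UPt n G 𝓑) where
  le := Relation.ReflTransGen (UStep n G 𝓑)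
  le_refl _ := Relation.ReflTransGen.refl
  le_trans _ _ _ := Relation.ReflTransGen.trans
  le_antisymm a b hab hba := by
    have mono : ∀ {x y : UPt n G 𝓑}, Relation.ReflTransGen (UStep n G 𝓑) x y →
        x.rank ≤ y.rank := by
      intro x y h
      induction h with
      | refl => exact le_rfl
      | tail _ h2 ih => exact ih.trans h2.rank_lt.le
    rcases hab.cases_head with h | ⟨c, hc, hcb⟩
    · exact h
    rcases hba.cases_head with h | ⟨d, hd, hda⟩
    · exact h.symm
    have h1 := hc.rank_lt
    have h2 := mono hcb
    have h3 := hd.rank_lt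
    have h4 := mono hda
    omega

/-- `B` is a block for `G`: for every `σ ∈ G`, `σ[B] ∩ B ≠ ∅` implies `σ[B] = B`. -/
def IsBlockOf (n : ℕ) (G : Subgroup (Equiv.Perm (Fin n))) (B : Set (Fin n)) : Prop :=
  ∀ σ ∈ G, ((σ : Equiv.Perm (Fin n)) '' B ∩ B).Nonempty → (σ : Equiv.Perm (Fin n)) '' B = B

/-- A block partition `𝓑 = ⋃_{j=1}^ℓ G·B_j` for `G` with orbit cut `{B_1,…,B_ℓ}`
(the `B_j` are the `cut j`): the `B_j` are nonempty blocks, the family of all images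
`σ[B_i]` (`σ ∈ G`) partitions `{1,…,n}`, and distinct members of the orbit cut lie in
distinct `G`-orbits of blocks. -/
structure BlockPartition (n : ℕ) (G : Subgroup (Equiv.Perm (Fin n))) where
  ℓ : ℕ
  cut : Fin ℓ → Set (Fin n)
  nonempty_cut : ∀ i, (cut i).Nonempty
  isBlock_cut : ∀ i, IsBlockOf n G (cut i)
  partitions : ∀ x : Fin n,
    ∃! C : Set (Fin n), (∃ i, ∃ σ ∈ G, (σ : Equiv.Perm (Fin n)) '' cut i = C) ∧ x ∈ C
  cut_distinct_orbits : ∀ i j : Fin ℓ, ∀ σ ∈ G,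
    (σ : Equiv.Perm (Fin n)) '' cut i = cut j → i = j

/-- The block partition `𝓑 = ⋃_{j=1}^ℓ G·B_j` as a set of subsets of `{1,…,n}`. -/
def BlockPartition.blocks {n : ℕ} {G : Subgroup (Equiv.Perm (Fin n))}
    (P : BlockPartition n G) : Set (Set (Fin n)) :=
  { C | ∃ i, ∃ σ ∈ G, (σ : Equiv.Perm (Fin n)) '' P.cut i = C }

/-- Composition `σ ∘ μ` of a restriction `μ = θ|_B` with `σ ∈ G`; this is the
restriction `(σθ)|_B`. -/
def Restr.comp {n : ℕ} {G : Subgroup (Equiv.Perm (Fin n))} {𝓑 : Set (Set (Fin n))}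
    (σ : G) (μ : Restr n G 𝓑) : Restr n G 𝓑 :=
  ⟨⟨μ.1.1, fun x => (σ : Equiv.Perm (Fin n)) (μ.1.2 x)⟩, by
    obtain ⟨hB, θ, hθ, hf⟩ := μ.2
    refine ⟨hB, (σ : Equiv.Perm (Fin n)) * θ, mul_mem σ.2 hθ, ?_⟩
    funext x
    simp [hf]⟩

/-- The order is generated by `UStep`, so a strict inequality ends in a generating comparability. -/
theorem exists_le_step_of_lt {n : ℕ} {G : Subgroup (Equiv.Perm (Fin n))} {𝓑 : Set (Set (Fin n))}
    {x y : UPt n G 𝓑} (h : x < y) : ∃ z, x ≤ z ∧ UStep n G 𝓑 z y := by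
  rcases Relation.ReflTransGen.cases_tail h.le with e | ⟨z, h1, h2⟩
  · exact absurd e.symm h.ne
  · exact ⟨z, h1, h2⟩

theorem UStep.lt {n : ℕ} {G : Subgroup (Equiv.Perm (Fin n))} {𝓑 : Set (Set (Fin n))}
    {x y : UPt n G 𝓑} (h : UStep n G 𝓑 x y) : x < y :=
  lt_of_le_of_ne (Relation.ReflTransGen.single h) fun e => by
    have := h.rank_lt
    rw [e] at this
    exact lt_irrefl _ this

theorem not_lt_low {n : ℕ} {G : Subgroup (Equiv.Perm (Fin n))} {𝓑 : Set (Set (Fin n))}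
    {x : UPt n G 𝓑} {i : Fin n} : ¬ x < .low i := by
  intro h
  obtain ⟨z, -, hz⟩ := exists_le_step_of_lt h
  cases hz

theorem not_lt_grp {n : ℕ} {G : Subgroup (Equiv.Perm (Fin n))} {𝓑 : Set (Set (Fin n))}
    {x : UPt n G 𝓑} {θ : G} : ¬ x < .grp θ := by
  intro h
  obtain ⟨z, -, hz⟩ := exists_le_step_of_lt h
  cases hz

theorem lt_up_iff {n : ℕ} {G : Subgroup (Equiv.Perm (Fin n))} {𝓑 : Set (Set (Fin n))}
    {x : UPt n G 𝓑} {k : Fin n} :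
    x < .up k ↔ ∃ i : Fin n, x = .low i ∧ ((i : ℕ) = k ∨ (i : ℕ) = k + 1) := by
  constructor
  · intro h
    obtain ⟨z, hxz, hz⟩ := exists_le_step_of_lt h
    cases hz with
    | fence_eq =>
      rcases hxz.eq_or_lt with e | h'
      · exact ⟨k, e, Or.inl rfl⟩
      · exact absurd h' not_lt_low
    | fence_succ _ j hj =>
      rcases hxz.eq_or_lt with e | h'
      · exact ⟨j, e, Or.inr hj⟩
      · exact absurd h' not_lt_low
  · rintro ⟨i, rfl, h | h⟩
    · obtain rfl := Fin.ext h
      exact (UStep.fence_eq i).lt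
    · exact (UStep.fence_succ k i h).lt

theorem low_lt_up_iff {n : ℕ} {G : Subgroup (Equiv.Perm (Fin n))} {𝓑 : Set (Set (Fin n))}
    {i k : Fin n} :
    (UPt.low i : UPt n G 𝓑) < .up k ↔ ((i : ℕ) = k ∨ (i : ℕ) = k + 1) := by
  rw [lt_up_iff]
  constructor
  · rintro ⟨j, e, h⟩
    cases e
    exact h
  · exact fun h => ⟨i, rfl, h⟩

/-- The `u_k` are the elements of height one. -/
theorem isUp_iff {n : ℕ} {G : Subgroup (Equiv.Perm (Fin n))} {𝓑 : Set (Set (Fin n))}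
    {x : UPt n G 𝓑} :
    (∃ k, x = .up k) ↔ (∃ y, y < x) ∧ ¬ ∃ z y, z < y ∧ y < x := by
  constructor
  · rintro ⟨k, rfl⟩
    refine ⟨⟨_, (UStep.fence_eq k).lt⟩, ?_⟩
    rintro ⟨z, y, hzy, hy⟩
    obtain ⟨i, rfl, -⟩ := lt_up_iff.1 hy
    exact not_lt_low hzy
  · rintro ⟨⟨y, hy⟩, hno⟩
    cases x with
    | low i => exact absurd hy not_lt_low
    | up k => exact ⟨k, rfl⟩
    | grp θ => exact absurd hy not_lt_grp
    | cell μ j => exact absurd ⟨_, _, (UStep.fence_eq j.1).lt, (UStep.up_cell μ j).lt⟩ hno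
    | pt k =>
      obtain ⟨z, -, hz⟩ := exists_le_step_of_lt hy
      cases hz with
      | cell_pt μ j => exact absurd ⟨_, _, (UStep.up_cell μ j).lt, (UStep.cell_pt μ j).lt⟩ hno

/-- A level-preserving automorphism of the fence, given by its actions `a` on the lower and `b` on
the upper elements, is the identity. -/
theorem fence_rigid {n : ℕ} {a b : Fin n → Fin n} (ha : Function.Injective a)
    (hb : Function.Injective b)
    (h : ∀ i k : Fin n, ((a i : ℕ) = b k ∨ (a i : ℕ) = b k + 1) ↔
      ((i : ℕ) = k ∨ (i : ℕ) = k + 1)) :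
    ∀ i : Fin n, a i = i ∧ b i = i := by
  have hbs : Function.Surjective b := Finite.surjective_of_injective hb
  suffices H : ∀ m : ℕ, ∀ hm : m < n, a ⟨m, hm⟩ = ⟨m, hm⟩ ∧ b ⟨m, hm⟩ = ⟨m, hm⟩ from
    fun i => H i i.2
  intro m
  induction m with
  | zero =>
    intro hm
    have ha0 : a ⟨0, hm⟩ = ⟨0, hm⟩ := by
      by_contra hne
      have hpos : (a ⟨0, hm⟩ : ℕ) ≠ 0 := fun e => hne (Fin.ext e)
      have hlt := (a ⟨0, hm⟩).2
      -- A lower element other than the first has two upper neighbours; their preimages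
      -- are both the unique upper neighbour of the first lower element.
      obtain ⟨k, hk⟩ := hbs (a ⟨0, hm⟩)
      obtain ⟨k', hk'⟩ := hbs ⟨(a ⟨0, hm⟩ : ℕ) - 1, by omega⟩
      have h1 := (h ⟨0, hm⟩ k).1 (Or.inl (by rw [hk]))
      have h2 := (h ⟨0, hm⟩ k').1 (Or.inr (by rw [hk']; simp only; omega))
      simp only at h1 h2
      have e : k = k' := Fin.ext (by omega)
      rw [← e, hk] at hk'
      have := congrArg Fin.val hk'
      simp only at this
      omega
    refine ⟨ha0, ?_⟩
    have h1 := (h ⟨0, hm⟩ ⟨0, hm⟩).2 (Or.inl rfl)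
    rw [ha0] at h1
    simp only at h1
    exact Fin.ext (by simp only; omega)
  | succ m ih =>
    intro hm
    obtain ⟨iha, ihb⟩ := ih (by omega)
    have ha1 : a ⟨m + 1, hm⟩ = ⟨m + 1, hm⟩ := by
      rcases (h ⟨m + 1, hm⟩ ⟨m, by omega⟩).2 (Or.inr rfl) with h1 | h1
      · rw [ihb] at h1
        have := ha ((Fin.ext h1).trans iha.symm)
        simp at this
      · rw [ihb] at h1
        exact Fin.ext h1
    refine ⟨ha1, ?_⟩
    rcases (h ⟨m + 1, hm⟩ ⟨m + 1, hm⟩).2 (Or.inl rfl) with h1 | h1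
    · rw [ha1] at h1
      exact Fin.ext h1.symm
    · rw [ha1] at h1
      simp only at h1
      have h2 : b ⟨m + 1, hm⟩ = ⟨m, by omega⟩ := Fin.ext (by simp only; omega)
      have := hb (h2.trans ihb.symm)
      simp at this

/-- Every order-automorphism of `U_{G⋌𝓑}` restricts to the identity on the
fence `F = {ℓ_1,u_1,…,ℓ_n,u_n}`. -/
theorem automorphism_fixes_fence (n : ℕ) (hn : 1 ≤ n) (G : Subgroup (Equiv.Perm (Fin n)))
    (P : BlockPartition n G) (Ψ : UPt n G P.blocks ≃o UPt n G P.blocks) :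
    (∀ i : Fin n, Ψ (UPt.low i) = UPt.low i) ∧
    (∀ i : Fin n, Ψ (UPt.up i) = UPt.up i) := by
  have hup : ∀ i : Fin n, ∃ k, Ψ (.up i) = .up k := by
    intro i
    obtain ⟨⟨y, hy⟩, hno⟩ := isUp_iff.1 ⟨i, (rfl : (UPt.up i : UPt n G P.blocks) = _)⟩
    refine isUp_iff.2 ⟨⟨Ψ y, Ψ.lt_iff_lt.2 hy⟩, ?_⟩
    rintro ⟨z, w, hzw, hw⟩
    exact hno ⟨Ψ.symm z, Ψ.symm w, Ψ.symm.lt_iff_lt.2 hzw, by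
      simpa using Ψ.symm.lt_iff_lt.2 hw⟩
  choose b hb using hup
  have hlow : ∀ i : Fin n, ∃ k, Ψ (.low i) = .low k := by
    intro i
    have h := Ψ.lt_iff_lt.2 (UStep.fence_eq (G := G) (𝓑 := P.blocks) i).lt
    rw [hb] at h
    obtain ⟨k, hk, -⟩ := lt_up_iff.1 h
    exact ⟨k, hk⟩
  choose a ha using hlow
  have hai : Function.Injective a := by
    intro i j e
    have : Ψ (.low i) = Ψ (.low j) := by rw [ha, ha, e]
    exact UPt.low.inj (Ψ.injective this)
  have hbi : Function.Injective b := by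
    intro i j e
    have : Ψ (.up i) = Ψ (.up j) := by rw [hb, hb, e]
    exact UPt.up.inj (Ψ.injective this)
  have key := fence_rigid hai hbi fun i k => by
    rw [← low_lt_up_iff (G := G) (𝓑 := P.blocks), ← low_lt_up_iff (G := G) (𝓑 := P.blocks),
      ← ha, ← hb, Ψ.lt_iff_lt]
  exact ⟨fun i => by rw [ha, (key i).1], fun i => by rw [hb, (key i).2]⟩
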